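/- There exists a unique symmetric K-bilinear form (·,·) on U_q^-(g) such that (1,1)=1 and (e_i'a, b) = (a, f_i b) for all i∈I and a,b∈U_q^-(g). This form is non-degenerate, and it moreover satisfies (e_i^* a, b) = (a, b f_i) for all i∈I and a,b∈U_q^-(g). -/

import Mathlib

noncomputable section
open scoped BigOperators

abbrev KK : Type := RatFunc ℚ

def qq : KK := RatFunc.X

def qZ (n : ℤ) : KK := qq ^ n

def qInt (d : ℤ) (k : ℕ) : KK := (qq ^ (d * k) - qq ^ (-(d * k : ℤ))) / (qq ^ d - qq ^ (-d : ℤ))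

def qFact (d : ℤ) (k : ℕ) : KK := ∏ m ∈ Finset.range k, qInt d (m + 1)

variable {I : Type} [DecidableEq I]

/-- `b = 1 - (α_i^∨, α_j)` -/
def serreN (A : I → I → ℤ) (i j : I) : ℕ := (1 - 2 * A i j / A i i).toNat

def fSerre (A : I → I → ℤ) (i j : I) : FreeAlgebra KK I :=
  ∑ k ∈ Finset.range (serreN A i j + 1),
    ((-1 : KK) ^ k * (qFact (A i i / 2) k)⁻¹ * (qFact (A i i / 2) (serreN A i j - k))⁻¹) •
      ((FreeAlgebra.ι KK i) ^ k * FreeAlgebra.ι KK j * (FreeAlgebra.ι KK i) ^ (serreN A i j - k))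

inductive SerreRel (A : I → I → ℤ) : FreeAlgebra KK I → FreeAlgebra KK I → Prop
  | serre (i j : I) (h : i ≠ j) : SerreRel A (fSerre A i j) 0

abbrev Um (A : I → I → ℤ) : Type := RingQuot (SerreRel A)

def fgen (A : I → I → ℤ) (i : I) : Um A := RingQuot.mkAlgHom KK (SerreRel A) (FreeAlgebra.ι KK i)

def IsWt (A : I → I → ℤ) (ν : I →₀ ℕ) (a : Um A) : Prop :=
  a ∈ Submodule.span KK {x | ∃ L : List I, (∀ i, L.count i = ν i) ∧ x = (L.map (fgen A)).prod}

def IsCartan (A : I → I → ℤ) : Prop :=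
  (∀ i j, A i j = A j i) ∧ (∀ i, 0 < A i i) ∧ (∀ i, 2 ∣ A i i) ∧
  (∀ i j, i ≠ j → A i j ≤ 0) ∧ (∀ i j, A i i ∣ 2 * A i j)

def EprimRel (A : I → I → ℤ) (E : I → Module.End KK (Um A)) : Prop :=
  (∀ i, E i 1 = 0) ∧
  ∀ i j (a : Um A), E i (fgen A j * a) =
    (if i = j then a else 0) + qZ (-(A i j)) • (fgen A j * (E i a))

def EstarRel (A : I → I → ℤ) (Es : I → Module.End KK (Um A)) : Prop :=
  (∀ i, Es i 1 = 0) ∧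
  ∀ i j (a : Um A), Es i (a * fgen A j) =
    (if i = j then a else 0) + qZ (-(A i j)) • ((Es i a) * fgen A j)

/-- The defining properties of the bilinear form `(·,·)` on `U_q^-(g)`. -/
def BilProp (A : I → I → ℤ) (E : I → Module.End KK (Um A))
    (B : Um A →ₗ[KK] Um A →ₗ[KK] KK) : Prop :=
  (∀ a b : Um A, B a b = B b a) ∧ B 1 1 = 1 ∧
  ∀ (i : I) (a b : Um A), B (E i a) b = B a (fgen A i * b)


/-! ### Abstract setting -/

section abstract_part

theorem ind_left {I K C : Type*} [CommSemiring K] [Semiring C] [Algebra K C] (f : I → C)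
    (gen : Algebra.adjoin K (Set.range f) = ⊤) (S : Submodule K C) (h1 : (1 : C) ∈ S)
    (hm : ∀ i a, a ∈ S → f i * a ∈ S) (a : C) : a ∈ S := by
  have key : ∀ x : C, ∀ y ∈ S, x * y ∈ S := by
    intro x
    have hx : x ∈ Algebra.adjoin K (Set.range f) := by rw [gen]; trivial
    induction hx using Algebra.adjoin_induction with
    | mem x hx => obtain ⟨i, rfl⟩ := hx; exact fun y hy => hm i y hy
    | algebraMap r => intro y hy; rw [← Algebra.smul_def]; exact S.smul_mem _ hy
    | add x y _ _ h1 h2 => intro z hz; rw [add_mul]; exact S.add_mem (h1 z hz) (h2 z hz)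
    | mul x y _ _ h1 h2 => intro z hz; rw [mul_assoc]; exact h1 _ (h2 z hz)
  simpa using key a 1 h1

theorem ind_right {I K C : Type*} [CommSemiring K] [Semiring C] [Algebra K C] (f : I → C)
    (gen : Algebra.adjoin K (Set.range f) = ⊤) (S : Submodule K C) (h1 : (1 : C) ∈ S)
    (hm : ∀ i a, a ∈ S → a * f i ∈ S) (a : C) : a ∈ S := by
  have key : ∀ x : C, ∀ y ∈ S, y * x ∈ S := by
    intro x
    have hx : x ∈ Algebra.adjoin K (Set.range f) := by rw [gen]; trivial
    induction hx using Algebra.adjoin_induction with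
    | mem x hx => obtain ⟨i, rfl⟩ := hx; exact fun y hy => hm i y hy
    | algebraMap r =>
      intro y hy; rw [← Algebra.commutes, ← Algebra.smul_def]; exact S.smul_mem _ hy
    | add x y _ _ h1 h2 => intro z hz; rw [mul_add]; exact S.add_mem (h1 z hz) (h2 z hz)
    | mul x y _ _ h1 h2 => intro z hz; rw [← mul_assoc]; exact h2 _ (h1 z hz)
  simpa using key a 1 h1

/-- Abstract data: an algebra with generators, grading, derivations. -/
structure QD (I K U : Type) [DecidableEq I] [Field K] [Ring U] [Algebra K U] where
  A : I → I → ℤ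
  symm : ∀ i j, A i j = A j i
  q : K
  q0 : q ≠ 0
  f : I → U
  gen : Algebra.adjoin K (Set.range f) = ⊤
  tau : I → U →ₐ[K] U
  tau_f : ∀ i k, tau i (f k) = q ^ (-(A i k)) • f k
  gr : U →ₐ[K] AddMonoidAlgebra U (I →₀ ℕ)
  gr_f : ∀ k, gr (f k) = AddMonoidAlgebra.single (Finsupp.single k 1) (f k)
  sg : U →ₐ[K] Uᵐᵒᵖ
  sg_f : ∀ k, sg (f k) = MulOpposite.op (f k)
  ep : U →ₐ[K] K
  ep_f : ∀ k, ep (f k) = 0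
  E : I → Module.End K U
  E_one : ∀ i, E i 1 = 0
  E_mul : ∀ i j a, E i (f j * a) = (if i = j then a else 0) + q ^ (-(A i j)) • (f j * E i a)
  Es : I → Module.End K U
  Es_one : ∀ i, Es i 1 = 0
  Es_mul : ∀ i j a, Es i (a * f j) = (if i = j then a else 0) + q ^ (-(A i j)) • (Es i a * f j)

set_option linter.unusedSectionVars false
set_option linter.unusedSimpArgs false

namespace QD

variable {K U : Type} [Field K] [Ring U] [Algebra K U] (D : QD I K U)

theorem indL (S : Submodule K U) (h1 : (1 : U) ∈ S)
    (hm : ∀ i a, a ∈ S → D.f i * a ∈ S) (a : U) : a ∈ S := ind_left D.f D.gen S h1 hm a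

theorem indR (S : Submodule K U) (h1 : (1 : U) ∈ S)
    (hm : ∀ i a, a ∈ S → a * D.f i ∈ S) (a : U) : a ∈ S := ind_right D.f D.gen S h1 hm a

/-- equality of linear maps -/
theorem extL {W : Type*} [AddCommGroup W] [Module K W] (φ ψ : U →ₗ[K] W) (h1 : φ 1 = ψ 1)
    (hm : ∀ i a, φ a = ψ a → φ (D.f i * a) = ψ (D.f i * a)) (a : U) : φ a = ψ a :=
  D.indL (LinearMap.eqLocus φ ψ) h1 hm a

theorem extR {W : Type*} [AddCommGroup W] [Module K W] (φ ψ : U →ₗ[K] W) (h1 : φ 1 = ψ 1)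
    (hm : ∀ i a, φ a = ψ a → φ (a * D.f i) = ψ (a * D.f i)) (a : U) : φ a = ψ a :=
  D.indR (LinearMap.eqLocus φ ψ) h1 hm a

/-- pairing of simple root and weight -/
def pr (i : I) (β : I →₀ ℕ) : ℤ := β.sum fun j n => (n : ℤ) * D.A i j

theorem pr_add (i : I) (β γ : I →₀ ℕ) : D.pr i (β + γ) = D.pr i β + D.pr i γ := by
  unfold pr
  rw [Finsupp.sum_add_index'] <;> intros <;> simp [add_mul]

@[simp] theorem pr_zero (i : I) : D.pr i 0 = 0 := by simp [pr]

@[simp] theorem pr_single (i j : I) : D.pr i (Finsupp.single j 1) = D.A i j := by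
  simp [pr]

/-- the form on weights -/
def fm (β γ : I →₀ ℕ) : ℤ := β.sum fun i n => (n : ℤ) * D.pr i γ

theorem fm_add_left (β γ δ : I →₀ ℕ) : D.fm (β + γ) δ = D.fm β δ + D.fm γ δ := by
  unfold fm
  rw [Finsupp.sum_add_index'] <;> intros <;> simp [add_mul]

theorem fm_add_right (β γ δ : I →₀ ℕ) : D.fm β (γ + δ) = D.fm β γ + D.fm β δ := by
  simp [fm, pr_add, mul_add, Finsupp.sum_add]

theorem fm_single_left (i : I) (β : I →₀ ℕ) : D.fm (Finsupp.single i 1) β = D.pr i β := by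
  simp [fm]

theorem fm_single_right (i : I) (β : I →₀ ℕ) : D.fm β (Finsupp.single i 1) = D.pr i β := by
  simp [fm, pr]
  exact Finsupp.sum_congr fun j _ => by rw [D.symm j i]

/-- sum of the diagonal -/
def dg (β : I →₀ ℕ) : ℤ := β.sum fun i n => (n : ℤ) * D.A i i

theorem dg_add (β γ : I →₀ ℕ) : D.dg (β + γ) = D.dg β + D.dg γ := by
  unfold dg
  rw [Finsupp.sum_add_index'] <;> intros <;> simp [add_mul]

/-- exponent -/
def NN (β : I →₀ ℕ) : ℤ := (D.fm β β - D.dg β) / 2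

@[simp] theorem NN_zero : D.NN 0 = 0 := by simp [NN, fm, dg]

theorem NN_add (i : I) (γ : I →₀ ℕ) : D.NN (Finsupp.single i 1 + γ) = D.NN γ + D.pr i γ := by
  unfold NN
  have : D.fm (Finsupp.single i 1 + γ) (Finsupp.single i 1 + γ) - D.dg (Finsupp.single i 1 + γ)
      = (D.fm γ γ - D.dg γ) + D.pr i γ * 2 := by
    rw [fm_add_left, fm_add_right, fm_add_right, dg_add, fm_single_left, fm_single_left,
      fm_single_right]
    simp [dg]
    ring
  rw [this, Int.add_mul_ediv_right _ _ (by norm_num)]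

/-- degree of a weight -/
def ht (β : I →₀ ℕ) : ℕ := β.sum fun _ n => n

theorem ht_add (β γ : I →₀ ℕ) : ht (β + γ) = ht β + ht γ := by
  unfold ht
  rw [Finsupp.sum_add_index'] <;> intros <;> simp

@[simp] theorem ht_single (i : I) : ht (Finsupp.single i 1) = 1 := by simp [ht]

@[simp] theorem ht_zero : ht (0 : I →₀ ℕ) = 0 := by simp [ht]

theorem wt_cases (i : I) (β : I →₀ ℕ) : β i = 0 ∨ ∃ γ, β = Finsupp.single i 1 + γ := by
  by_cases h : β i = 0
  · exact Or.inl h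
  · right
    refine ⟨β - Finsupp.single i 1, ?_⟩
    rw [add_tsub_cancel_of_le]
    simpa using Nat.one_le_iff_ne_zero.mpr h

/-- weight component -/
def p (β : I →₀ ℕ) : U →ₗ[K] U where
  toFun a := (D.gr a).coeff β
  map_add' a b := by simp
  map_smul' c a := by simp

theorem p_one (β : I →₀ ℕ) : D.p β 1 = if β = 0 then 1 else 0 := by
  simp [p, AddMonoidAlgebra.one_def, Finsupp.single_apply, eq_comm]

@[simp] theorem p_fmul_add (i : I) (γ : I →₀ ℕ) (a : U) :
    D.p (Finsupp.single i 1 + γ) (D.f i * a) = D.f i * D.p γ a := by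
  simp [p, D.gr_f]

theorem p_fmul_zero (i : I) (β : I →₀ ℕ) (h : β i = 0) (a : U) : D.p β (D.f i * a) = 0 := by
  simp only [p, LinearMap.coe_mk, AddHom.coe_mk, map_mul, D.gr_f]
  apply AddMonoidAlgebra.coeff_single_mul_of_forall_add_ne
  rintro d rfl
  simp at h

theorem p_p (β γ : I →₀ ℕ) (a : U) : D.p γ (D.p β a) = if γ = β then D.p β a else 0 := by
  classical
  have : ∀ a : U, ∀ β γ : I →₀ ℕ, D.p γ (D.p β a) = if γ = β then D.p β a else 0 := by
    intro a
    let S : Submodule K U :=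
      { carrier := {a | ∀ β γ : I →₀ ℕ, D.p γ (D.p β a) = if γ = β then D.p β a else 0}
        zero_mem' := by simp
        add_mem' := by
          intro a b ha hb β γ
          rw [map_add, map_add, ha, hb]; split_ifs <;> simp
        smul_mem' := by
          intro c a ha β γ
          rw [map_smul, map_smul, ha]; split_ifs <;> simp }
    refine D.indL S ?_ ?_ a
    · intro β γ
      rw [p_one]
      split_ifs <;> simp_all [p_one]
    · intro i a ha β γ
      rcases wt_cases i β with h | ⟨β', rfl⟩
      · simp [p_fmul_zero _ _ _ h]
      · rw [p_fmul_add]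
        rcases wt_cases i γ with h | ⟨γ', rfl⟩
        · rw [p_fmul_zero _ _ _ h, if_neg]
          rintro rfl
          simp at h
        · rw [p_fmul_add, ha]
          simp
  exact this a β γ

/-- total coefficient -/
def tot : AddMonoidAlgebra U (I →₀ ℕ) →ₗ[K] U where
  toFun x := x.coeff.sum fun _ y => y
  map_add' x y := by
    classical
    rw [AddMonoidAlgebra.coeff_add, Finsupp.sum_add_index'] <;> simp
  map_smul' c x := by
    rw [AddMonoidAlgebra.coeff_smul, Finsupp.sum_smul_index' (by simp), RingHom.id_apply,
      Finsupp.smul_sum]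

theorem tot_single (β : I →₀ ℕ) (u : U) :
    tot (K := K) (AddMonoidAlgebra.single β u : AddMonoidAlgebra U (I →₀ ℕ)) = u := by
  simp [tot]

theorem tot_mul (β : I →₀ ℕ) (u : U) (x : AddMonoidAlgebra U (I →₀ ℕ)) :
    tot (K := K) (AddMonoidAlgebra.single β u * x) = u * tot (K := K) x := by
  induction x using AddMonoidAlgebra.induction_linear with
  | zero => simp
  | add x y hx hy => rw [mul_add, map_add, map_add, hx, hy, mul_add]
  | single γ v => rw [AddMonoidAlgebra.single_mul_single, tot_single, tot_single]

theorem p_sum (a : U) : (D.gr a).coeff.sum (fun _ x => x) = a := by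
  refine D.extL (tot ∘ₗ D.gr.toLinearMap) LinearMap.id ?_ ?_ a
  · simp [AddMonoidAlgebra.one_def, tot_single]
  · intro i a ha
    simp only [LinearMap.comp_apply, AlgHom.toLinearMap_apply, LinearMap.id_apply] at ha ⊢
    rw [map_mul, D.gr_f, tot_mul, ha]

theorem ind_p (S : Submodule K U) (a : U) (h : ∀ β, D.p β a ∈ S) : a ∈ S := by
  rw [← D.p_sum a]
  exact S.sum_mem fun β _ => h β

theorem tau_p (i : I) (β : I →₀ ℕ) (a : U) :
    D.tau i (D.p β a) = D.q ^ (-(D.pr i β)) • D.p β a := by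
  have : ∀ a : U, ∀ β : I →₀ ℕ, D.tau i (D.p β a) = D.q ^ (-(D.pr i β)) • D.p β a := by
    intro a
    let S : Submodule K U :=
      { carrier := {a | ∀ β : I →₀ ℕ, D.tau i (D.p β a) = D.q ^ (-(D.pr i β)) • D.p β a}
        zero_mem' := by simp
        add_mem' := by
          intro a b ha hb β
          rw [map_add, map_add, ha, hb, smul_add]
        smul_mem' := by
          intro c a ha β
          rw [map_smul, map_smul, ha, smul_comm] }
    refine D.indL S ?_ ?_ a
    · intro β
      rw [p_one]
      split_ifs <;> simp_all
    · intro j a ha β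
      rcases wt_cases j β with h | ⟨γ, rfl⟩
      · simp [p_fmul_zero _ _ _ h]
      · rw [p_fmul_add, map_mul, ha, D.tau_f, pr_add, pr_single, neg_add, zpow_add₀ D.q0]
        simp only [smul_mul_assoc, mul_smul_comm, mul_smul]
        rw [smul_comm]
  exact this a β

theorem p_tau (i : I) (β : I →₀ ℕ) (a : U) : D.p β (D.tau i a) = D.tau i (D.p β a) := by
  have : a ∈ LinearMap.eqLocus (D.p β ∘ₗ (D.tau i).toLinearMap)
      ((D.tau i).toLinearMap ∘ₗ D.p β) := by
    apply D.ind_p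
    intro γ
    simp only [LinearMap.mem_eqLocus, LinearMap.comp_apply, AlgHom.toLinearMap_apply, tau_p,
      map_smul, p_p]
    split_ifs with h
    · rw [tau_p]
    · simp
  exact this

/-- twisted Leibniz rules -/
theorem E_leib (i : I) (a b : U) : D.E i (a * b) = D.E i a * b + D.tau i a * D.E i b := by
  refine D.extL (D.E i ∘ₗ LinearMap.mulRight K b)
    (LinearMap.mulRight K b ∘ₗ D.E i + LinearMap.mulRight K (D.E i b) ∘ₗ (D.tau i).toLinearMap)
    ?_ ?_ a
  · simp [D.E_one]
  · intro j a ha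
    simp only [LinearMap.comp_apply, LinearMap.add_apply, LinearMap.mulRight_apply,
      AlgHom.toLinearMap_apply] at ha ⊢
    rw [mul_assoc, D.E_mul, ha, D.E_mul, map_mul, D.tau_f]
    split_ifs
    all_goals
      simp only [mul_add, add_mul, smul_add, smul_mul_assoc, zero_mul, mul_assoc, zero_add]
      try abel

theorem Es_leib (i : I) (a b : U) : D.Es i (a * b) = a * D.Es i b + D.Es i a * D.tau i b := by
  refine D.extR (D.Es i ∘ₗ LinearMap.mulLeft K a)
    (LinearMap.mulLeft K a ∘ₗ D.Es i + LinearMap.mulLeft K (D.Es i a) ∘ₗ (D.tau i).toLinearMap)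
    ?_ ?_ b
  · simp [D.Es_one]
  · intro j b ha
    simp only [LinearMap.comp_apply, LinearMap.add_apply, LinearMap.mulLeft_apply,
      AlgHom.toLinearMap_apply] at ha ⊢
    rw [← mul_assoc, D.Es_mul, ha, D.Es_mul, map_mul, D.tau_f]
    split_ifs
    all_goals
      simp only [mul_add, add_mul, smul_add, mul_smul_comm, mul_zero, mul_assoc, zero_add]
      try abel

theorem E_f (i j : I) : D.E i (D.f j) = if i = j then 1 else 0 := by
  have := D.E_mul i j 1
  simpa [D.E_one] using this

theorem Es_f (i j : I) : D.Es i (D.f j) = if i = j then 1 else 0 := by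
  have := D.Es_mul i j 1
  simpa [D.Es_one] using this

theorem Es_mul_left (i j : I) (a : U) :
    D.Es i (D.f j * a) = (if i = j then D.tau i a else 0) + D.f j * D.Es i a := by
  rw [Es_leib, Es_f]
  split_ifs <;> simp [add_comm]

/-- A general weight lemma for twisted derivations. -/
theorem deriv_p (i : I) (Δ : U →ₗ[K] U) (φ : U →ₗ[K] U) (c : I → K) (h1 : Δ 1 = 0)
    (hφ : ∀ β a, D.p β (φ a) = φ (D.p β a))
    (hm : ∀ j a, Δ (D.f j * a) = (if i = j then φ a else 0) + c j • (D.f j * Δ a)) (a : U) :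
    (∀ γ, Δ (D.p (Finsupp.single i 1 + γ) a) = D.p γ (Δ a)) ∧
      ∀ β : I →₀ ℕ, β i = 0 → Δ (D.p β a) = 0 := by
  classical
  let S : Submodule K U :=
    { carrier := {a | (∀ γ, Δ (D.p (Finsupp.single i 1 + γ) a) = D.p γ (Δ a)) ∧
      ∀ β : I →₀ ℕ, β i = 0 → Δ (D.p β a) = 0}
      zero_mem' := by simp
      add_mem' := by
        rintro a b ⟨ha, ha'⟩ ⟨hb, hb'⟩
        refine ⟨fun γ => ?_, fun β h => ?_⟩
        · simp [ha, hb]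
        · simp [ha' β h, hb' β h]
      smul_mem' := by
        rintro c a ⟨ha, ha'⟩
        refine ⟨fun γ => ?_, fun β h => ?_⟩
        · simp [ha]
        · simp [ha' β h] }
  refine D.indL S ?_ ?_ a
  · refine ⟨fun γ => ?_, fun β h => ?_⟩
    · rw [p_one, if_neg, h1]; · simp
      intro h
      have := DFunLike.congr_fun h i
      simp at this
    · rw [p_one]; split_ifs <;> simp [h1]
  · rintro j a ⟨ha, ha'⟩
    refine ⟨fun γ => ?_, fun β h => ?_⟩
    · by_cases hij : i = j
      · subst hij
        rw [p_fmul_add, hm, hm, if_pos rfl, if_pos rfl, map_add, map_smul, hφ]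
        congr 2
        rcases wt_cases i γ with h | ⟨γ', rfl⟩
        · rw [p_fmul_zero _ _ _ h, ha' _ h, mul_zero]
        · rw [p_fmul_add, ha]
      · rcases wt_cases j γ with h | ⟨γ', rfl⟩
        · rw [p_fmul_zero, hm, if_neg hij]
          · simp [p_fmul_zero _ _ _ h]
          · simp [h, Finsupp.single_apply, hij]
        · rw [add_left_comm, p_fmul_add, hm, hm, if_neg hij, if_neg hij]
          simp [ha]
    · rcases wt_cases j β with h' | ⟨γ', rfl⟩
      · simp [p_fmul_zero _ _ _ h']
      · have hij : i ≠ j := by rintro rfl; simp at h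
        rw [p_fmul_add, hm, if_neg hij, ha']
        · simp
        · simpa [Finsupp.single_apply, hij.symm] using h

theorem E_p (i : I) (γ : I →₀ ℕ) (a : U) :
    D.E i (D.p (Finsupp.single i 1 + γ) a) = D.p γ (D.E i a) :=
  (D.deriv_p i (D.E i) LinearMap.id (fun j => D.q ^ (-(D.A i j))) (D.E_one i) (by simp)
    (D.E_mul i) a).1 γ

theorem E_p_zero (i : I) (β : I →₀ ℕ) (h : β i = 0) (a : U) : D.E i (D.p β a) = 0 :=
  (D.deriv_p i (D.E i) LinearMap.id (fun j => D.q ^ (-(D.A i j))) (D.E_one i) (by simp)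
    (D.E_mul i) a).2 β h

theorem Es_p (i : I) (γ : I →₀ ℕ) (a : U) :
    D.Es i (D.p (Finsupp.single i 1 + γ) a) = D.p γ (D.Es i a) :=
  (D.deriv_p i (D.Es i) (D.tau i).toLinearMap (fun _ => 1) (D.Es_one i)
    (by intro β a; exact D.p_tau i β a)
    (by intro j a; rw [one_smul]; exact D.Es_mul_left i j a) a).1 γ

theorem Es_p_zero (i : I) (β : I →₀ ℕ) (h : β i = 0) (a : U) : D.Es i (D.p β a) = 0 :=
  (D.deriv_p i (D.Es i) (D.tau i).toLinearMap (fun _ => 1) (D.Es_one i)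
    (by intro β a; exact D.p_tau i β a)
    (by intro j a; rw [one_smul]; exact D.Es_mul_left i j a) a).2 β h

theorem E_tau (i j : I) (a : U) :
    D.E j (D.tau i a) = D.q ^ (-(D.A i j)) • D.tau i (D.E j a) := by
  refine D.extL (D.E j ∘ₗ (D.tau i).toLinearMap)
    (D.q ^ (-(D.A i j)) • ((D.tau i).toLinearMap ∘ₗ D.E j)) ?_ ?_ a
  · simp [D.E_one]
  · intro k a ha
    simp only [LinearMap.comp_apply, LinearMap.smul_apply, AlgHom.toLinearMap_apply] at ha ⊢
    rw [map_mul, D.tau_f, smul_mul_assoc, map_smul, D.E_mul, D.E_mul, ha, map_add, map_smul,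
      map_mul, D.tau_f]
    split_ifs with h
    · subst h
      simp only [smul_add, smul_mul_assoc, mul_smul_comm, smul_smul]
    · simp only [smul_add, smul_mul_assoc, mul_smul_comm, smul_smul, map_zero, zero_add, smul_zero]
      congr 1; ring

theorem Es_tau (i j : I) (a : U) :
    D.Es j (D.tau i a) = D.q ^ (-(D.A i j)) • D.tau i (D.Es j a) := by
  refine D.extR (D.Es j ∘ₗ (D.tau i).toLinearMap)
    (D.q ^ (-(D.A i j)) • ((D.tau i).toLinearMap ∘ₗ D.Es j)) ?_ ?_ a
  · simp [D.Es_one]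
  · intro k a ha
    simp only [LinearMap.comp_apply, LinearMap.smul_apply, AlgHom.toLinearMap_apply] at ha ⊢
    rw [map_mul, D.tau_f, mul_smul_comm, map_smul, D.Es_mul, D.Es_mul, ha, map_add, map_smul,
      map_mul, D.tau_f]
    split_ifs with h
    · subst h
      simp only [smul_add, smul_mul_assoc, mul_smul_comm, smul_smul]
    · simp only [smul_add, smul_mul_assoc, mul_smul_comm, smul_smul, map_zero, zero_add, smul_zero]
      congr 1; ring

theorem E_Es (i j : I) (a : U) : D.E i (D.Es j a) = D.Es j (D.E i a) := by
  refine D.extL (D.E i ∘ₗ D.Es j) (D.Es j ∘ₗ D.E i) ?_ ?_ a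
  · simp [D.E_one, D.Es_one]
  · intro k a ha
    simp only [LinearMap.comp_apply] at ha ⊢
    rw [Es_mul_left, map_add, D.E_mul, D.E_mul, map_add, map_smul, Es_mul_left, ha]
    by_cases h1 : j = k <;> by_cases h2 : i = k
    · subst h1; subst h2
      simp [E_tau, smul_add]; abel
    · subst h1; simp [h2, E_tau, D.symm i j]
    · subst h2; simp [h1]
    · simp [h1, h2]

/-! ### The form -/

/-- the defining properties of the form -/
def IsForm (B : U →ₗ[K] U →ₗ[K] K) : Prop :=
  (∀ a b, B a b = B b a) ∧ B 1 1 = 1 ∧ ∀ i a b, B (D.E i a) b = B a (D.f i * b)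

/-- action of the free algebra by the operators E -/
def actE : FreeAlgebra K I →ₐ[K] (Module.End K U)ᵐᵒᵖ :=
  FreeAlgebra.lift K fun i => MulOpposite.op (D.E i)

/-- the form on the free algebra times U -/
def B1 : FreeAlgebra K I →ₗ[K] U →ₗ[K] K where
  toFun w := D.ep.toLinearMap ∘ₗ (D.actE w).unop
  map_add' v w := by ext; simp
  map_smul' c v := by ext; simp

theorem B1_one (a : U) : D.B1 1 a = D.ep a := by simp [B1]

theorem B1_mul (i : I) (w : FreeAlgebra K I) (a : U) :
    D.B1 (FreeAlgebra.ι K i * w) a = D.B1 w (D.E i a) := by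
  simp [B1, actE]

/-- projection from the free algebra -/
def pi : FreeAlgebra K I →ₐ[K] U := FreeAlgebra.lift K D.f

@[simp] theorem pi_ι (i : I) : D.pi (FreeAlgebra.ι K i) = D.f i := by simp [pi]

theorem pi_surj : Function.Surjective D.pi := by
  intro a
  refine D.indL (LinearMap.range D.pi.toLinearMap) ⟨1, by simp⟩ ?_ a
  rintro i _ ⟨w, rfl⟩
  exact ⟨FreeAlgebra.ι K i * w, by simp⟩

theorem indT (S : Submodule K (FreeAlgebra K I)) (h1 : 1 ∈ S)
    (hm : ∀ i a, a ∈ S → FreeAlgebra.ι K i * a ∈ S) (a : FreeAlgebra K I) : a ∈ S :=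
  ind_left (FreeAlgebra.ι K) (FreeAlgebra.adjoin_range_ι K I) S h1 hm a

theorem B1_adj (w : FreeAlgebra K I) : ∀ i, ∃ w', D.pi w' = D.E i (D.pi w) ∧
    ∀ a, D.B1 w (D.f i * a) = D.B1 w' a := by
  let S : Submodule K (FreeAlgebra K I) :=
    { carrier := {w | ∀ i, ∃ w', D.pi w' = D.E i (D.pi w) ∧
        ∀ a, D.B1 w (D.f i * a) = D.B1 w' a}
      zero_mem' := fun i => ⟨0, by simp⟩
      add_mem' := by
        intro v w hv hw i
        obtain ⟨v', h1, h2⟩ := hv i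
        obtain ⟨w', h3, h4⟩ := hw i
        exact ⟨v' + w', by simp [h1, h3], fun a => by simp [h2, h4]⟩
      smul_mem' := by
        intro c v hv i
        obtain ⟨v', h1, h2⟩ := hv i
        exact ⟨c • v', by simp [h1], fun a => by simp [h2]⟩ }
  refine indT S ?_ ?_ w
  · intro i
    exact ⟨0, by simp [D.E_one], fun a => by simp [B1_one, D.ep_f]⟩
  · intro j w hw i
    obtain ⟨w', h1, h2⟩ := hw i
    refine ⟨(if i = j then w else 0) + D.q ^ (-(D.A i j)) • (FreeAlgebra.ι K j * w'), ?_, ?_⟩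
    · rw [map_add, map_smul, map_mul, map_mul, pi_ι, D.E_mul, h1]
      split_ifs <;> simp
    · intro a
      rw [B1_mul, D.E_mul, map_add, map_smul, h2, D.symm j i, map_add, map_smul]
      simp only [LinearMap.add_apply, LinearMap.smul_apply, B1_mul]
      congr 1
      by_cases h : i = j
      · simp [h]
      · simp [h, Ne.symm h]

theorem B1_one_right (w : FreeAlgebra K I) : D.B1 w 1 = D.ep (D.pi w) := by
  let S : Submodule K (FreeAlgebra K I) :=
    LinearMap.eqLocus (LinearMap.applyₗ (1 : U) ∘ₗ D.B1) (D.ep.toLinearMap ∘ₗ D.pi.toLinearMap)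
  refine indT S ?_ ?_ w
  · simp [S, B1_one]
  · intro i w hw
    simp [S, B1_mul, D.E_one, D.ep_f]

theorem B1_symm (v w : FreeAlgebra K I) : D.B1 v (D.pi w) = D.B1 w (D.pi v) := by
  let S : Submodule K (FreeAlgebra K I) :=
    { carrier := {v | ∀ w, D.B1 v (D.pi w) = D.B1 w (D.pi v)}
      zero_mem' := fun i => by simp
      add_mem' := by
        intro v v' hv hw w
        simp [hv w, hw w]
      smul_mem' := by
        intro c v hv w
        simp [hv w] }
  refine indT S ?_ ?_ v w
  · intro w
    rw [B1_one, map_one, B1_one_right]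
  · intro i v hv w
    obtain ⟨w', h1, h2⟩ := D.B1_adj w i
    rw [B1_mul, ← h1, hv, map_mul, pi_ι, h2]

theorem exists_form : ∃ B : U →ₗ[K] U →ₗ[K] K, D.IsForm B := by
  obtain ⟨g, hg⟩ := LinearMap.exists_rightInverse_of_surjective D.pi.toLinearMap
    (LinearMap.range_eq_top.mpr D.pi_surj)
  have hg' : ∀ a, D.pi (g a) = a := fun a => LinearMap.congr_fun hg a
  have key : ∀ v w, D.pi v = D.pi w → D.B1 v = D.B1 w := by
    intro v w h
    ext a
    obtain ⟨u, rfl⟩ := D.pi_surj a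
    rw [B1_symm, h, B1_symm]
  refine ⟨D.B1 ∘ₗ g, ?_, ?_, ?_⟩
  · intro a b
    have := D.B1_symm (g a) (g b)
    rwa [hg', hg'] at this
  · have := key (g 1) 1 (by rw [hg', map_one])
    simp [this, B1_one]
  · intro i a b
    have h0 := D.B1_symm (g (D.E i a)) (g b)
    have h2 := D.B1_symm (g a) (g (D.f i * b))
    rw [hg', hg'] at h0 h2
    simp only [LinearMap.comp_apply]
    rw [h0, h2, key (g (D.f i * b)) (FreeAlgebra.ι K i * g b) (by simp [hg']), B1_mul]

variable {D} {B : U →ₗ[K] U →ₗ[K] K}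

theorem IsForm.one_right (hB : D.IsForm B) (a : U) : B a 1 = D.ep a := by
  rw [hB.1]
  refine D.extL (B 1) D.ep.toLinearMap ?_ ?_ a
  · simp [hB.2.1]
  · intro i a _
    rw [← hB.2.2, D.E_one]
    simp [D.ep_f]

theorem IsForm.f_left (hB : D.IsForm B) (i : I) (a b : U) : B (D.f i * a) b = B a (D.E i b) := by
  rw [hB.1, ← hB.2.2, hB.1]

theorem IsForm.unique {B' : U →ₗ[K] U →ₗ[K] K} (hB : D.IsForm B) (hB' : D.IsForm B') :
    B = B' := by
  ext a b
  let S : Submodule K U := LinearMap.eqLocus B.flip B'.flip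
  have : b ∈ S := by
    refine D.indL S ?_ ?_ b
    · ext a
      simp [hB.one_right, hB'.one_right]
    · intro i b hb
      ext a
      have := LinearMap.congr_fun hb (D.E i a)
      simp only [LinearMap.flip_apply] at this ⊢
      rw [← hB.2.2, ← hB'.2.2, this]
  exact LinearMap.congr_fun this a

theorem ep_E (D : QD I K U) (i : I) (a : U) : D.ep (D.E i a) = D.ep (D.Es i a) := by
  refine D.extL (D.ep.toLinearMap ∘ₗ D.E i) (D.ep.toLinearMap ∘ₗ D.Es i) ?_ ?_ a
  · simp [D.E_one, D.Es_one]
  · intro j a _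
    have ht : D.ep (D.tau i a) = D.ep a := by
      refine D.extL (D.ep.toLinearMap ∘ₗ (D.tau i).toLinearMap) D.ep.toLinearMap ?_ ?_ a
      · simp
      · intro k a _
        simp [D.tau_f, D.ep_f]
    simp only [LinearMap.comp_apply, AlgHom.toLinearMap_apply]
    rw [D.E_mul, D.Es_mul_left]
    split_ifs <;> simp [D.ep_f, ht]

theorem IsForm.Es (hB : D.IsForm B) (i : I) (a b : U) : B (D.Es i a) b = B a (b * D.f i) := by
  let S : Submodule K U := LinearMap.eqLocus (B.flip.compr₂ (LinearMap.id) |>.compl₂ (D.Es i))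
    (B.flip ∘ₗ LinearMap.mulRight K (D.f i))
  have : b ∈ S := by
    refine D.indL S ?_ ?_ b
    · ext a
      have h := hB.2.2 i a 1
      rw [mul_one, hB.one_right] at h
      simp [hB.one_right, ← h, ep_E]
    · intro j b hb
      ext a
      have := LinearMap.congr_fun hb (D.E j a)
      simp at this ⊢
      rw [← hB.2.2, E_Es, this, hB.2.2, mul_assoc]
  simpa using LinearMap.congr_fun this a

theorem IsForm.p (hB : D.IsForm B) (β : I →₀ ℕ) (a b : U) : B (D.p β a) b = B a (D.p β b) := by
  let S : Submodule K U :=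
    { carrier := {b | ∀ a β, B (D.p β a) b = B a (D.p β b)}
      zero_mem' := by simp
      add_mem' := by intro b b' hb hb' a β; simp [hb a β, hb' a β]
      smul_mem' := by intro c b hb a β; simp [hb a β] }
  refine D.indL S ?_ ?_ b a β
  · intro a β
    rw [hB.one_right, p_one]
    have : ∀ a : U, D.ep (D.p β a) = if β = 0 then D.ep a else 0 := by
      intro a
      refine (D.extL (D.ep.toLinearMap ∘ₗ D.p β) (if β = 0 then D.ep.toLinearMap else 0) ?_ ?_ a).trans ?_
      · rw [LinearMap.comp_apply, p_one]; split_ifs <;> simp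
      · intro i a _
        simp only [LinearMap.comp_apply, AlgHom.toLinearMap_apply]
        rcases wt_cases i β with h | ⟨γ, rfl⟩
        · rw [p_fmul_zero _ _ _ h]; split_ifs <;> simp [D.ep_f]
        · rw [p_fmul_add]; split_ifs <;> simp [D.ep_f]
      · split_ifs <;> simp
    rw [this]
    split_ifs
    · rw [hB.one_right]
    · simp
  · intro i b hb a β
    rw [← hB.2.2]
    rcases wt_cases i β with h | ⟨γ, rfl⟩
    · rw [E_p_zero _ _ _ h, p_fmul_zero _ _ _ h]; simp
    · rw [E_p, p_fmul_add, hb, hB.2.2]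

theorem ep_p_zero (D : QD I K U) (a : U) : D.p 0 a = algebraMap K U (D.ep a) := by
  refine D.extL (D.p 0) ((Algebra.linearMap K U) ∘ₗ D.ep.toLinearMap) ?_ ?_ a
  · simp [p_one]
  · intro i a _
    rw [p_fmul_zero _ _ _ (by simp)]
    simp [D.ep_f]

theorem IsForm.tau (hB : D.IsForm B) (i : I) (a b : U) : B (D.tau i a) b = B a (D.tau i b) := by
  have : b ∈ LinearMap.eqLocus (B (D.tau i a)) (B a ∘ₗ (D.tau i).toLinearMap) := by
    apply D.ind_p
    intro β
    simp only [LinearMap.mem_eqLocus, LinearMap.comp_apply, AlgHom.toLinearMap_apply]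
    rw [tau_p, ← hB.p, p_tau, tau_p]
    simp [hB.p]
  exact this

/-! ### Antipode and primitive elements -/

open TensorProduct

/-- the reversal -/
def sgl (D : QD I K U) : U →ₗ[K] U :=
  (MulOpposite.opLinearEquiv K).symm.toLinearMap ∘ₗ D.sg.toLinearMap

theorem sgl_one (D : QD I K U) : D.sgl 1 = 1 := by simp [sgl]

theorem sgl_mul (D : QD I K U) (a b : U) : D.sgl (a * b) = D.sgl b * D.sgl a := by simp [sgl]

theorem sgl_f (D : QD I K U) (i : I) : D.sgl (D.f i) = D.f i := by simp [sgl, D.sg_f]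

theorem sgl_sgl (D : QD I K U) (a : U) : D.sgl (D.sgl a) = a := by
  refine D.extL (D.sgl ∘ₗ D.sgl) LinearMap.id ?_ ?_ a
  · simp [sgl_one]
  · intro i a ha
    simp only [LinearMap.comp_apply, LinearMap.id_apply] at ha ⊢
    rw [sgl_mul, sgl_mul, sgl_f, sgl_f, ha]

/-- antipode scalar -/
def chi (D : QD I K U) (β : I →₀ ℕ) : K := (-1) ^ ht β * D.q ^ (-(D.NN β))

theorem chi_add (D : QD I K U) (i : I) (γ : I →₀ ℕ) :
    D.chi (Finsupp.single i 1 + γ) = -(D.q ^ (-(D.pr i γ)) * D.chi γ) := by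
  unfold chi
  rw [NN_add, neg_add, zpow_add₀ D.q0, ht_add, ht_single, pow_add]
  ring

/-- all coefficients -/
def cf (D : QD I K U) : U →ₗ[K] ((I →₀ ℕ) →₀ U) where
  toFun a := (D.gr a).coeff
  map_add' := by simp
  map_smul' := by simp

theorem cf_p (D : QD I K U) (β : I →₀ ℕ) (a : U) :
    D.cf (D.p β a) = Finsupp.single β (D.p β a) := by
  classical
  ext γ
  rw [Finsupp.single_apply]
  have := D.p_p β γ a
  simp only [eq_comm] at this ⊢
  exact this

/-- antipode -/
def Sa (D : QD I K U) : U →ₗ[K] U := (Finsupp.lsum K fun β => D.chi β • D.sgl) ∘ₗ D.cf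

theorem Sa_p (D : QD I K U) (β : I →₀ ℕ) (a : U) :
    D.Sa (D.p β a) = D.chi β • D.sgl (D.p β a) := by
  simp [Sa, cf_p]

theorem Sa_f (D : QD I K U) (i : I) (a : U) :
    D.Sa (D.f i * a) = -(D.Sa (D.tau i a) * D.f i) := by
  have : a ∈ LinearMap.eqLocus (D.Sa ∘ₗ LinearMap.mulLeft K (D.f i))
      (-(LinearMap.mulRight K (D.f i) ∘ₗ D.Sa ∘ₗ (D.tau i).toLinearMap)) := by
    apply D.ind_p
    intro β
    simp only [LinearMap.mem_eqLocus, LinearMap.comp_apply, LinearMap.neg_apply,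
      AlgHom.toLinearMap_apply, LinearMap.mulLeft_apply, LinearMap.mulRight_apply]
    rw [tau_p, ← p_fmul_add, Sa_p, p_fmul_add, sgl_mul, sgl_f, map_smul, Sa_p, chi_add]
    simp [mul_smul]
  simpa using this

/-- multiplication after antipode -/
def mu (D : QD I K U) : U ⊗[K] U →ₗ[K] U := TensorProduct.lift (LinearMap.mul K U ∘ₗ D.Sa)

/-- twisted left multiplication -/
def Lam (D : QD I K U) (i : I) : U ⊗[K] U →ₗ[K] U ⊗[K] U :=
  TensorProduct.map (LinearMap.mulLeft K (D.f i)) LinearMap.id +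
    TensorProduct.map (D.tau i).toLinearMap (LinearMap.mulLeft K (D.f i))

theorem Lam_tmul (D : QD I K U) (i : I) (a b : U) :
    D.Lam i (a ⊗ₜ b) = (D.f i * a) ⊗ₜ b + D.tau i a ⊗ₜ (D.f i * b) := by
  simp [Lam]

theorem mu_Lam (D : QD I K U) (i : I) (t : U ⊗[K] U) : D.mu (D.Lam i t) = 0 := by
  induction t with
  | zero => simp
  | add x y hx hy => rw [map_add, map_add, hx, hy, add_zero]
  | tmul a b => 
    rw [Lam_tmul]
    simp [mu, Sa_f, mul_assoc]

/-- the tensor pairing -/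
def pair (B : U →ₗ[K] U →ₗ[K] K) (c d : U) : U ⊗[K] U →ₗ[K] K :=
  TensorProduct.lift ((LinearMap.mul K K).compl₁₂ (B c) (B d))

theorem pair_tmul (c d a b : U) : pair B c d (a ⊗ₜ b) = B c a * B d b := by
  simp [pair]

theorem pair_Lam (hB : D.IsForm B) (i : I) (c d : U) (t : U ⊗[K] U) :
    pair B c d (D.Lam i t) = pair B (D.E i c) d t + pair B (D.tau i c) (D.E i d) t := by
  induction t with
  | zero => simp
  | add x y hx hy => rw [map_add, map_add, hx, hy, map_add, map_add]; ring
  | tmul a b => rw [Lam_tmul, map_add, pair_tmul, pair_tmul, pair_tmul, pair_tmul, hB.2.2, hB.2.2,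
      hB.tau]

/-- filtration by degree -/
def Lt (D : QD I K U) (n : ℕ) : Submodule K U where
  carrier := {a | ∀ β, n ≤ ht β → D.p β a = 0}
  zero_mem' := by simp
  add_mem' := by intro a b ha hb β h; rw [map_add, ha β h, hb β h, add_zero]
  smul_mem' := by intro c a ha β h; rw [map_smul, ha β h, smul_zero]

theorem Lt_mono (D : QD I K U) {m n : ℕ} (h : m ≤ n) : D.Lt m ≤ D.Lt n :=
  fun _ ha β hβ => ha β (h.trans hβ)

theorem Lt_f (D : QD I K U) {n : ℕ} (i : I) {a : U} (ha : a ∈ D.Lt n) :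
    D.f i * a ∈ D.Lt (n + 1) := by
  intro β hβ
  rcases wt_cases i β with h | ⟨γ, rfl⟩
  · exact D.p_fmul_zero _ _ h _
  · rw [p_fmul_add, ha, mul_zero]
    rw [ht_add, ht_single] at hβ
    omega

theorem Lt_tau (D : QD I K U) {n : ℕ} (i : I) {a : U} (ha : a ∈ D.Lt n) : D.tau i a ∈ D.Lt n := by
  intro β hβ
  rw [p_tau, ha β hβ, map_zero]

theorem Lt_p (D : QD I K U) {n : ℕ} (β : I →₀ ℕ) (h : ht β < n) (a : U) : D.p β a ∈ D.Lt n := by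
  intro γ hγ
  rw [p_p, if_neg]
  rintro rfl
  omega

theorem Lt_one (D : QD I K U) {n : ℕ} (h : 0 < n) : (1 : U) ∈ D.Lt n := by
  have := D.Lt_p (n := n) 0 (by simpa using h) 1
  simpa [p_one] using this

/-- image of the tensor square of the filtration -/
def Img (D : QD I K U) (n : ℕ) : Submodule K (U ⊗[K] U) :=
  LinearMap.range (TensorProduct.map (D.Lt n).subtype (D.Lt n).subtype)

theorem Img_tmul (D : QD I K U) {n : ℕ} {a b : U} (ha : a ∈ D.Lt n) (hb : b ∈ D.Lt n) :
    a ⊗ₜ[K] b ∈ D.Img n := ⟨(⟨a, ha⟩ : D.Lt n) ⊗ₜ (⟨b, hb⟩ : D.Lt n), by simp⟩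

theorem Img_Lam (D : QD I K U) {n : ℕ} (i : I) {t : U ⊗[K] U} (ht : t ∈ D.Img n) :
    D.Lam i t ∈ D.Img (n + 1) := by
  obtain ⟨s, rfl⟩ := ht
  induction s with
  | zero => simp
  | add x y hx hy => rw [map_add, map_add]; exact Submodule.add_mem _ hx hy
  | tmul a b =>
    rw [TensorProduct.map_tmul, Lam_tmul]
    apply Submodule.add_mem
    · exact D.Img_tmul (D.Lt_f i a.2) (D.Lt_mono (Nat.le_succ _) b.2)
    · exact D.Img_tmul (D.Lt_mono (Nat.le_succ _) (D.Lt_tau i a.2)) (D.Lt_f i b.2)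

theorem exists_cop (hB : D.IsForm B) (a : U) : ∀ β, ∃ t : U ⊗[K] U,
    (∀ c d, pair B c d t = B (c * d) (D.p β a)) ∧
    (β ≠ 0 → D.mu t = 0 ∧
      t - D.p β a ⊗ₜ (1 : U) - (1 : U) ⊗ₜ D.p β a ∈ D.Img (ht β)) ∧
    (β = 0 → t = D.ep a • ((1 : U) ⊗ₜ (1 : U))) := by
  let S : Submodule K U :=
    { carrier := {a | ∀ β, ∃ t : U ⊗[K] U,
        (∀ c d, pair B c d t = B (c * d) (D.p β a)) ∧
        (β ≠ 0 → D.mu t = 0 ∧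
          t - D.p β a ⊗ₜ (1 : U) - (1 : U) ⊗ₜ D.p β a ∈ D.Img (ht β)) ∧
        (β = 0 → t = D.ep a • ((1 : U) ⊗ₜ (1 : U)))}
      zero_mem' := fun β => ⟨0, by simp, by simp, by simp⟩
      add_mem' := by
        intro a b ha hb β
        obtain ⟨t, h1, h2, h3⟩ := ha β
        obtain ⟨s, h4, h5, h6⟩ := hb β
        refine ⟨t + s, ?_, ?_, ?_⟩
        · intro c d; rw [map_add, map_add, map_add, h1, h4]
        · intro h
          refine ⟨by rw [map_add, (h2 h).1, (h5 h).1, add_zero], ?_⟩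
          have := Submodule.add_mem _ (h2 h).2 (h5 h).2
          convert this using 1
          rw [map_add, TensorProduct.add_tmul, TensorProduct.tmul_add]
          abel
        · intro h; rw [h3 h, h6 h, map_add, add_smul]
      smul_mem' := by
        intro k a ha β
        obtain ⟨t, h1, h2, h3⟩ := ha β
        refine ⟨k • t, ?_, ?_, ?_⟩
        · intro c d; rw [map_smul, map_smul, map_smul, h1]
        · intro h
          refine ⟨by rw [map_smul, (h2 h).1, smul_zero], ?_⟩
          have := Submodule.smul_mem _ k (h2 h).2
          convert this using 1
          rw [map_smul, ← TensorProduct.smul_tmul', TensorProduct.tmul_smul, smul_sub, smul_sub]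
        · intro h; rw [h3 h, map_smul, smul_eq_mul, mul_smul] }
  refine D.indL S ?_ ?_ a
  · intro β
    by_cases h : β = 0
    · subst h
      refine ⟨(1 : U) ⊗ₜ (1 : U), ?_, by simp, by simp⟩
      intro c d
      rw [pair_tmul, p_one, if_pos rfl, hB.one_right, hB.one_right, hB.one_right, map_mul]
    · refine ⟨0, ?_, ?_, fun h' => absurd h' h⟩
      · simp [p_one, h]
      · simp [p_one, h]
  · intro i a ha β
    rcases wt_cases i β with h | ⟨γ, rfl⟩
    · refine ⟨0, ?_, ?_, ?_⟩
      · simp [p_fmul_zero _ _ _ h]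
      · simp [p_fmul_zero _ _ _ h]
      · simp [D.ep_f]
    · obtain ⟨t, h1, h2, h3⟩ := ha γ
      refine ⟨D.Lam i t, ?_, ?_, ?_⟩
      · intro c d
        rw [pair_Lam hB, h1, h1, p_fmul_add, ← hB.2.2, E_leib, map_add, LinearMap.add_apply]
      · intro _
        refine ⟨D.mu_Lam i t, ?_⟩
        rw [p_fmul_add]
        by_cases hγ : γ = 0
        · subst hγ
          rw [h3 rfl, ep_p_zero, map_smul, Lam_tmul, Algebra.algebraMap_eq_smul_one]
          simp only [map_one, mul_one, mul_smul_comm, ← TensorProduct.smul_tmul',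
            TensorProduct.tmul_smul, smul_add]
          simp
        · obtain ⟨_, h5⟩ := h2 hγ
          have hpos : 0 < ht γ := by
            rw [Nat.pos_iff_ne_zero]
            intro h0
            apply hγ
            ext j
            by_contra hj
            have : ht γ = ∑ k ∈ γ.support, γ k := rfl
            rw [h0] at this
            exact hj (Finset.sum_eq_zero_iff.mp this.symm j (by simpa using hj))
          have h6 := D.Img_Lam i h5
          rw [map_sub, map_sub, Lam_tmul, Lam_tmul] at h6
          rw [ht_add, ht_single, add_comm 1]
          have h7 : D.tau i (D.p γ a) ⊗ₜ[K] (D.f i * 1) ∈ D.Img (ht γ + 1) :=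
            D.Img_tmul (D.Lt_tau i (D.Lt_p γ (by omega) a)) (D.Lt_f i (D.Lt_one hpos))
          have h8 : (D.f i * 1) ⊗ₜ[K] (D.p γ a) ∈ D.Img (ht γ + 1) :=
            D.Img_tmul (D.Lt_f i (D.Lt_one hpos)) (D.Lt_p γ (by omega) a)
          have := Submodule.add_mem _ (Submodule.add_mem _ h6 h7) h8
          convert this using 1
          rw [map_one]
          abel
      · intro h
        have := DFunLike.congr_fun h i
        simp at this

theorem tensor_nondeg (L : Submodule K U) (hL : ∀ a ∈ L, (∀ c, B c a = 0) → a = 0)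
    (t : U ⊗[K] U) (ht : t ∈ LinearMap.range (TensorProduct.map L.subtype L.subtype))
    (h : ∀ c d, pair B c d t = 0) : t = 0 := by
  classical
  obtain ⟨s, rfl⟩ := ht
  let b := Module.Basis.ofVectorSpace K L
  obtain ⟨g, rfl⟩ := (TensorProduct.equivFinsuppOfBasisRight (M := L) b).symm.surjective s
  rw [TensorProduct.equivFinsuppOfBasisRight_symm_apply] at h ⊢
  suffices hg : g = 0 by simp [hg]
  have h1 : ∀ c k, B c (g k) = 0 := by
    intro c
    have h2 : ∑ k ∈ g.support, (B c (g k)) • b k = 0 := by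
      apply Subtype.ext
      apply hL _ (Submodule.coe_mem _)
      intro d
      have := h c d
      simp only [Finsupp.sum, map_sum, TensorProduct.map_tmul, pair_tmul,
        Submodule.subtype_apply] at this
      simpa using this
    intro k
    by_cases hk : k ∈ g.support
    · exact linearIndependent_iff'.mp b.linearIndependent g.support _ h2 k hk
    · simp at hk
      simp [hk]
  ext k
  simpa using hL _ (g k).2 (fun c => h1 c k)

/-- a primitive element of weight `β` forces `NN β = 0` -/
theorem NN_eq_zero (hB : D.IsForm B) (hq : ∀ n : ℤ, D.q ^ n = 1 → n = 0)
    (β : I →₀ ℕ) (h0 : β ≠ 0)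
    (hlow : ∀ a ∈ D.Lt (ht β), (∀ c, B c a = 0) → a = 0) (x : U) (hx : D.p β x = x)
    (hxr : ∀ c, B c x = 0) (hx0 : x ≠ 0) : D.NN β = 0 := by
  obtain ⟨t, h1, h2, _⟩ := exists_cop hB x β
  obtain ⟨h3, h4⟩ := h2 h0
  rw [hx] at h1 h4
  have h5 := tensor_nondeg (D.Lt (ht β)) hlow _ h4 (by
    intro c d
    rw [map_sub, map_sub, h1, pair_tmul, pair_tmul, hxr, hxr, hxr]
    simp)
  have h6 : t = x ⊗ₜ (1 : U) + (1 : U) ⊗ₜ x := by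
    rw [sub_sub, sub_eq_zero] at h5; exact h5
  have hS1 : D.Sa 1 = 1 := by
    have := D.Sa_p 0 1
    simpa [p_one, sgl_one, chi] using this
  have hSx : D.Sa x = D.chi β • D.sgl x := by
    have := D.Sa_p β x
    rwa [hx] at this
  have h7 : D.chi β • D.sgl x = -x := by
    rw [h6] at h3
    simp [mu, hS1] at h3
    rw [← hSx]
    exact eq_neg_of_add_eq_zero_left h3
  have h8 : D.chi β • D.chi β • x = x := by
    have := congrArg D.sgl h7
    rw [map_smul, sgl_sgl, map_neg] at this
    rw [this, smul_neg, h7, neg_neg]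
  have h9 : D.chi β * D.chi β = 1 := by
    rw [smul_smul] at h8
    have : (D.chi β * D.chi β - 1) • x = 0 := by rw [sub_smul, h8, one_smul, sub_self]
    rcases smul_eq_zero.mp this with h | h
    · exact sub_eq_zero.mp h
    · exact absurd h hx0
  have h10 : D.q ^ (-(D.NN β) + -(D.NN β)) = 1 := by
    rw [zpow_add₀ D.q0, ← h9]
    unfold chi
    have : ((-1 : K) ^ ht β) * (-1) ^ ht β = 1 := by rw [← mul_pow]; simp
    linear_combination (-(D.q ^ (-(D.NN β)) * D.q ^ (-(D.NN β)))) * this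
  have := hq _ h10
  omega

/-! ### The rank one argument -/

/-- twisted adjoint action of `f i` -/
def ad (D : QD I K U) (i : I) : Module.End K U :=
  LinearMap.mulLeft K (D.f i) - LinearMap.mulRight K (D.f i) ∘ₗ (D.tau i).toLinearMap

theorem ad_apply (D : QD I K U) (i : I) (a : U) :
    D.ad i a = D.f i * a - D.tau i a * D.f i := by
  simp [ad]

theorem ad_mul (D : QD I K U) (i : I) (a b : U) :
    D.ad i (a * b) = D.ad i a * b + D.tau i a * D.ad i b := by
  simp only [ad_apply, map_mul, sub_mul, mul_sub, mul_assoc]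
  abel

theorem tau_ad (D : QD I K U) (i : I) (a : U) :
    D.tau i (D.ad i a) = D.q ^ (-(D.A i i)) • D.ad i (D.tau i a) := by
  simp only [ad_apply, map_sub, map_mul, D.tau_f, smul_sub, smul_mul_assoc, mul_smul_comm]

theorem Es_ad (D : QD I K U) (i : I) (a : U) (h : D.Es i a = 0) : D.Es i (D.ad i a) = 0 := by
  rw [ad_apply, map_sub, Es_mul_left, D.Es_mul, Es_tau, h]
  simp

theorem E_ad (D : QD I K U) (i : I) (a : U) :
    D.E i (D.ad i a) = (a - D.tau i (D.tau i a)) + D.q ^ (-(D.A i i)) • D.ad i (D.E i a) := by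
  rw [ad_apply, map_sub, D.E_mul, E_leib, E_tau, E_f, ad_apply]
  simp only [if_true, smul_sub, smul_mul_assoc, mul_one]
  abel

theorem tau_ad_pow (D : QD I K U) (i : I) (m : ℕ) (a : U) :
    D.tau i ((D.ad i ^ m) a) = (D.q ^ (-(D.A i i))) ^ m • (D.ad i ^ m) (D.tau i a) := by
  induction m generalizing a with
  | zero => simp
  | succ m ih =>
    rw [pow_succ, Module.End.mul_apply, Module.End.mul_apply, ih, tau_ad, map_smul, smul_smul,
      pow_succ]

theorem ad_pow_tau (D : QD I K U) (i : I) (m : ℕ) (a : U) (h : (D.ad i ^ m) a = 0) :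
    (D.ad i ^ m) (D.tau i a) = 0 := by
  have := D.tau_ad_pow i m a
  rw [h, map_zero] at this
  rcases smul_eq_zero.mp this.symm with h | h
  · exact absurd h (pow_ne_zero _ (zpow_ne_zero _ D.q0))
  · exact h

theorem ad_pow_mul (D : QD I K U) (i : I) (n : ℕ) : ∀ (m k : ℕ) (a b : U), m + k = n →
    (D.ad i ^ m) a = 0 → (D.ad i ^ k) b = 0 → (D.ad i ^ n) (a * b) = 0 := by
  induction n with
  | zero =>
    intro m k a b h ha hb
    obtain rfl : m = 0 := by omega
    simp at ha
    simp [ha]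
  | succ n ih =>
    intro m k a b h ha hb
    rcases m with _ | m
    · simp at ha
      simp [ha]
    rcases k with _ | k
    · simp at hb
      simp [hb]
    rw [pow_succ, Module.End.mul_apply, ad_mul, map_add]
    rw [ih m (k + 1) _ _ (by omega) (by rwa [pow_succ] at ha) hb,
      ih (m + 1) k _ _ (by omega) (D.ad_pow_tau i _ _ ha) (by rwa [pow_succ] at hb), add_zero]

theorem ad_pow_mono (D : QD I K U) (i : I) (m k : ℕ) (a : U) (h : (D.ad i ^ m) a = 0) :
    (D.ad i ^ (k + m)) a = 0 := by
  rw [pow_add, Module.End.mul_apply, h, map_zero]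

/-- elements killed by `Es i` and nilpotent for `ad i` -/
def Nil (D : QD I K U) (i : I) : Submodule K U where
  carrier := {a | D.Es i a = 0 ∧ ∃ m, (D.ad i ^ m) a = 0}
  zero_mem' := by simp
  add_mem' := by
    rintro a b ⟨ha, m, hm⟩ ⟨hb, k, hk⟩
    refine ⟨by rw [map_add, ha, hb, add_zero], k + m, ?_⟩
    rw [map_add, ad_pow_mono _ _ _ _ _ hm, add_comm k m, ad_pow_mono _ _ _ _ _ hk, add_zero]
  smul_mem' := by
    rintro c a ⟨ha, m, hm⟩
    exact ⟨by rw [map_smul, ha, smul_zero], m, by rw [map_smul, hm, smul_zero]⟩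

theorem Nil_one (D : QD I K U) (i : I) : (1 : U) ∈ D.Nil i :=
  ⟨D.Es_one i, 1, by simp [ad_apply]⟩

theorem Nil_mul (D : QD I K U) (i : I) (a b : U) (ha : a ∈ D.Nil i) (hb : b ∈ D.Nil i) :
    a * b ∈ D.Nil i := by
  obtain ⟨ha, m, hm⟩ := ha
  obtain ⟨hb, k, hk⟩ := hb
  exact ⟨by rw [Es_leib, ha, hb]; simp, m + k, D.ad_pow_mul i _ m k a b rfl hm hk⟩

theorem Nil_tau (D : QD I K U) (i : I) (a : U) (ha : a ∈ D.Nil i) : D.tau i a ∈ D.Nil i := by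
  obtain ⟨ha, m, hm⟩ := ha
  exact ⟨by rw [Es_tau, ha]; simp, m, D.ad_pow_tau i m a hm⟩

theorem Nil_ad (D : QD I K U) (i : I) (a : U) (ha : a ∈ D.Nil i) : D.ad i a ∈ D.Nil i := by
  obtain ⟨ha, m, hm⟩ := ha
  refine ⟨D.Es_ad i a ha, m, ?_⟩
  rw [← Module.End.mul_apply, ← pow_succ, pow_succ', Module.End.mul_apply, hm, map_zero]

/-- the map with image the sums of `p_k * f^k` -/
def nilSum (D : QD I K U) (i : I) : (ℕ →₀ D.Nil i) →ₗ[K] U :=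
  Finsupp.lsum K fun k => LinearMap.mulRight K (D.f i ^ k) ∘ₗ (D.Nil i).subtype

theorem nilSum_single (D : QD I K U) (i : I) (k : ℕ) (a : D.Nil i) :
    D.nilSum i (Finsupp.single k a) = (a : U) * D.f i ^ k := by
  simp [nilSum]

theorem nilSum_surj (D : QD I K U) (i : I) (hs : ∀ j, j ≠ i → ∃ m, (D.ad i ^ m) (D.f j) = 0)
    (a : U) : ∃ g, D.nilSum i g = a := by
  refine D.indL (LinearMap.range (D.nilSum i)) ?_ ?_ a
  · exact ⟨Finsupp.single 0 ⟨1, D.Nil_one i⟩, by simp [nilSum_single]⟩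
  · rintro j _ ⟨g, rfl⟩
    induction g using Finsupp.induction_linear with
    | zero => simp
    | add g h hg hh => rw [map_add, mul_add]; exact Submodule.add_mem _ hg hh
    | single k a =>
      rw [nilSum_single]
      by_cases hj : j = i
      · subst hj
        have : D.f j * ((a : U) * D.f j ^ k) =
            D.ad j a * D.f j ^ k + D.tau j a * D.f j ^ (k + 1) := by
          rw [ad_apply, pow_succ', sub_mul]
          simp only [mul_assoc]
          abel
        rw [this]
        refine Submodule.add_mem _ ?_ ?_
        · exact ⟨Finsupp.single k ⟨_, D.Nil_ad j a a.2⟩, by simp [nilSum_single]⟩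
        · exact ⟨Finsupp.single (k + 1) ⟨_, D.Nil_tau j a a.2⟩, by simp [nilSum_single]⟩
      · have hf : D.f j ∈ D.Nil i := ⟨by rw [Es_f, if_neg (Ne.symm hj)], hs j hj⟩
        rw [← mul_assoc]
        exact ⟨Finsupp.single k ⟨_, D.Nil_mul i _ a hf a.2⟩, by simp [nilSum_single]⟩

theorem Es_mul_pow (D : QD I K U) (i : I) (a : U) (h : D.Es i a = 0) (k : ℕ) :
    D.Es i (a * D.f i ^ (k + 1)) =
      (∑ l ∈ Finset.range (k + 1), (D.q ^ (-(D.A i i))) ^ l) • (a * D.f i ^ k) := by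
  induction k with
  | zero => simp [D.Es_mul, h]
  | succ k ih =>
    rw [pow_succ, ← mul_assoc, D.Es_mul, ih, if_pos rfl, geom_sum_succ (n := k + 1), add_smul,
      one_smul, mul_smul, smul_mul_assoc, mul_assoc, ← pow_succ, add_comm]

theorem Es_pow_sum (D : QD I K U) (i : I) (n : ℕ) (g : ℕ → U) (hg : ∀ k, D.Es i (g k) = 0) :
    D.Es i (∑ k ∈ Finset.range (n + 1), g k * D.f i ^ k) = ∑ k ∈ Finset.range n,
      ((∑ l ∈ Finset.range (k + 1), (D.q ^ (-(D.A i i))) ^ l) • g (k + 1)) * D.f i ^ k := by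
  rw [Finset.sum_range_succ', map_add, map_sum]
  simp only [pow_zero, mul_one, hg, add_zero, smul_mul_assoc]
  exact Finset.sum_congr rfl fun k _ => D.Es_mul_pow i _ (hg _) k

theorem geom_ne (D : QD I K U) (hq : ∀ n : ℤ, D.q ^ n = 1 → n = 0) (i : I) (hA : 0 < D.A i i)
    (k : ℕ) : (∑ l ∈ Finset.range (k + 1), (D.q ^ (-(D.A i i))) ^ l) ≠ 0 := by
  intro h
  have h1 := geom_sum_mul (D.q ^ (-(D.A i i))) (k + 1)
  rw [h, zero_mul, eq_comm, sub_eq_zero, ← zpow_natCast, ← zpow_mul] at h1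
  have := hq _ h1
  have h3 : (0 : ℤ) < D.A i i * ((k + 1 : ℕ) : ℤ) := by positivity
  linarith

theorem sum_zero (D : QD I K U) (hq : ∀ n : ℤ, D.q ^ n = 1 → n = 0) (i : I) (hA : 0 < D.A i i)
    (n : ℕ) : ∀ (g : ℕ → U), (∀ k, D.Es i (g k) = 0) →
    ∑ k ∈ Finset.range n, g k * D.f i ^ k = 0 → ∀ k < n, g k = 0 := by
  induction n with
  | zero => intro g _ _ k hk; omega
  | succ n ih =>
    intro g hg h
    have h1 := D.Es_pow_sum i n g hg
    rw [h, map_zero] at h1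
    have h2 := ih (fun k => (∑ l ∈ Finset.range (k + 1), (D.q ^ (-(D.A i i))) ^ l) • g (k + 1))
      (fun k => by rw [map_smul, hg, smul_zero]) h1.symm
    have h3 : ∀ k < n, g (k + 1) = 0 := by
      intro k hk
      rcases smul_eq_zero.mp (h2 k hk) with h | h
      · exact absurd h (D.geom_ne hq i hA k)
      · exact h
    rw [Finset.sum_range_succ', Finset.sum_eq_zero] at h
    · intro k hk
      rcases k with _ | k
      · simpa using h
      · exact h3 k (by omega)
    · intro k hk
      rw [h3 k (Finset.mem_range.mp hk), zero_mul]

theorem mem_Nil (D : QD I K U) (hq : ∀ n : ℤ, D.q ^ n = 1 → n = 0) (i : I) (hA : 0 < D.A i i)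
    (hs : ∀ j, j ≠ i → ∃ m, (D.ad i ^ m) (D.f j) = 0) (x : U) (hx : D.Es i x = 0) :
    x ∈ D.Nil i := by
  obtain ⟨g, rfl⟩ := D.nilSum_surj i hs x
  obtain ⟨n, hn⟩ : ∃ n, g.support ⊆ Finset.range (n + 1) := by
    obtain ⟨n, hn⟩ := g.support.exists_nat_subset_range
    exact ⟨n, hn.trans (by simp)⟩
  have h1 : D.nilSum i g = ∑ k ∈ Finset.range (n + 1), (g k : U) * D.f i ^ k := by
    rw [nilSum, Finsupp.lsum_apply, Finsupp.sum_of_support_subset _ hn]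
    · simp
    · simp
  rw [h1] at hx ⊢
  have hg : ∀ k, D.Es i (g k) = 0 := fun k => (g k).2.1
  rw [Es_pow_sum D i n (fun k => (g k : U)) hg] at hx
  have h2 := D.sum_zero hq i hA n _ (fun k => by rw [map_smul, hg, smul_zero]) hx
  rw [Finset.sum_range_succ', Finset.sum_eq_zero]
  · simp
  · intro k hk
    rcases smul_eq_zero.mp (h2 k (Finset.mem_range.mp hk)) with h | h
    · exact absurd h (D.geom_ne hq i hA k)
    · rw [h, zero_mul]

theorem E_ad_pow (D : QD I K U) (i : I) (β : I →₀ ℕ) (x : U) (hx : D.p β x = x)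
    (hE : D.E i x = 0) (m : ℕ) :
    (1 - D.q ^ (-(D.A i i))) • D.E i ((D.ad i ^ (m + 1)) x) =
      ((1 - (D.q ^ (-(D.A i i))) ^ (m + 1)) * (1 - D.q ^ (-(D.pr i β)) * D.q ^ (-(D.pr i β)) *
        (D.q ^ (-(D.A i i))) ^ m)) • (D.ad i ^ m) x := by
  have ht : D.tau i x = D.q ^ (-(D.pr i β)) • x := by
    rw [← hx, tau_p]
  have htt : ∀ m, D.tau i (D.tau i ((D.ad i ^ m) x)) = (D.q ^ (-(D.pr i β)) *
      D.q ^ (-(D.pr i β)) * ((D.q ^ (-(D.A i i))) ^ m * (D.q ^ (-(D.A i i))) ^ m)) •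
        (D.ad i ^ m) x := by
    intro m
    simp only [tau_ad_pow, ht, map_smul, smul_smul]
    congr 1; ring
  induction m with
  | zero =>
    have := htt 0
    simp only [pow_zero, Module.End.one_apply, mul_one] at this
    rw [zero_add, pow_one, E_ad, this, hE]
    simp only [map_zero, smul_zero, add_zero, pow_one, pow_zero, Module.End.one_apply, mul_one]
    module
  | succ m ih =>
    rw [pow_succ' _ (m + 1), Module.End.mul_apply, E_ad, htt, smul_add, smul_comm,
      ← map_smul (D.ad i), ih, map_smul, ← Module.End.mul_apply, ← pow_succ']
    generalize (D.ad i ^ (m + 1)) x = y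
    generalize D.q ^ (-(D.A i i)) = u
    generalize D.q ^ (-(D.pr i β)) = w
    rw [show y - (w * w * (u ^ (m + 1) * u ^ (m + 1))) • y =
      (1 - w * w * (u ^ (m + 1) * u ^ (m + 1))) • y by rw [sub_smul, one_smul], smul_smul,
      smul_smul, ← add_smul]
    congr 1; ring

theorem pr_nonpos (D : QD I K U) (hq : ∀ n : ℤ, D.q ^ n = 1 → n = 0) (i : I) (hA : 0 < D.A i i)
    (hs : ∀ j, j ≠ i → ∃ m, (D.ad i ^ m) (D.f j) = 0) (β : I →₀ ℕ) (x : U) (hx : D.p β x = x)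
    (hx0 : x ≠ 0) (hE : D.E i x = 0) (hEs : D.Es i x = 0) : D.pr i β ≤ 0 := by
  by_contra hpr
  push Not at hpr
  obtain ⟨m, hm⟩ := (D.mem_Nil hq i hA hs x hEs).2
  have key : ∀ m, (D.ad i ^ m) x ≠ 0 := by
    intro m
    induction m with
    | zero => simpa using hx0
    | succ m ih =>
      intro h
      have h1 := D.E_ad_pow i β x hx hE m
      rw [h, map_zero, smul_zero, eq_comm] at h1
      rcases smul_eq_zero.mp h1 with h1 | h1
      · rcases mul_eq_zero.mp h1 with h1 | h1
        · rw [sub_eq_zero, eq_comm, ← zpow_natCast, ← zpow_mul] at h1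
          have := hq _ h1
          have h3 : (0 : ℤ) < D.A i i * ((m + 1 : ℕ) : ℤ) := by positivity
          linarith
        · rw [sub_eq_zero, eq_comm, ← zpow_natCast, ← zpow_mul, ← zpow_add₀ D.q0,
            ← zpow_add₀ D.q0] at h1
          have := hq _ h1
          have h3 : (0 : ℤ) ≤ D.A i i * ((m : ℕ) : ℤ) := by positivity
          linarith
      · exact ih h1
  exact key m hm

/-! ### Nondegeneracy -/

theorem fm_nonpos (D : QD I K U) (β : I →₀ ℕ) (h : ∀ i, D.pr i β ≤ 0) : D.fm β β ≤ 0 := by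
  unfold fm Finsupp.sum
  exact Finset.sum_nonpos fun i _ => mul_nonpos_of_nonneg_of_nonpos (by positivity) (h i)

theorem dg_pos (D : QD I K U) (hA : ∀ i, 0 < D.A i i) (β : I →₀ ℕ) (h : β ≠ 0) :
    0 < D.dg β := by
  unfold dg Finsupp.sum
  refine Finset.sum_pos (fun i hi => ?_) (by simpa using h)
  have : 0 < β i := Nat.pos_of_ne_zero (by simpa using hi)
  have := hA i
  positivity

theorem rad_wt (hB : D.IsForm B) (hq : ∀ n : ℤ, D.q ^ n = 1 → n = 0) (hA : ∀ i, 0 < D.A i i)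
    (hs : ∀ i j, j ≠ i → ∃ m, (D.ad i ^ m) (D.f j) = 0) (n : ℕ) : ∀ (β : I →₀ ℕ), ht β = n →
    ∀ x, D.p β x = x → (∀ c, B c x = 0) → x = 0 := by
  induction n using Nat.strong_induction_on with
  | _ n ih =>
    intro β hn x hx hr
    by_cases h0 : β = 0
    · subst h0
      have h1 := hr 1
      rw [hB.1, hB.one_right] at h1
      rw [← hx, ep_p_zero, h1, map_zero]
    by_contra hx0
    have hE : ∀ i, D.E i x = 0 := by
      intro i
      rcases wt_cases i β with h | ⟨γ, rfl⟩
      · rw [← hx, D.E_p_zero i β h]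
      · refine ih (ht γ) ?_ γ rfl _ ?_ ?_
        · rw [← hn, ht_add, ht_single]; omega
        · rw [← D.E_p, hx]
        · intro c
          rw [hB.1, hB.2.2, hB.1, ← hB.1, hB.1, hr]
    have hEs : ∀ i, D.Es i x = 0 := by
      intro i
      rcases wt_cases i β with h | ⟨γ, rfl⟩
      · rw [← hx, D.Es_p_zero i β h]
      · refine ih (ht γ) ?_ γ rfl _ ?_ ?_
        · rw [← hn, ht_add, ht_single]; omega
        · rw [← D.Es_p, hx]
        · intro c
          rw [hB.1, hB.Es, hB.1, hr]
    have hpr : ∀ i, D.pr i β ≤ 0 := fun i =>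
      D.pr_nonpos hq i (hA i) (hs i) β x hx hx0 (hE i) (hEs i)
    have hN := NN_eq_zero hB hq β h0 (by
      intro a ha har
      have : a ∈ (⊥ : Submodule K U) := by
        apply D.ind_p
        intro γ
        rw [Submodule.mem_bot]
        by_cases hγ : ht β ≤ ht γ
        · exact ha γ hγ
        · refine ih (ht γ) (by omega) γ rfl _ ?_ ?_
          · rw [p_p, if_pos rfl]
          · intro c
            rw [← hB.p, har]
      simpa using this) x hx hr hx0
    have h1 := D.fm_nonpos β hpr
    have h2 := D.dg_pos hA β h0
    unfold NN at hN
    omega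

theorem nondeg (hB : D.IsForm B) (hq : ∀ n : ℤ, D.q ^ n = 1 → n = 0) (hA : ∀ i, 0 < D.A i i)
    (hs : ∀ i j, j ≠ i → ∃ m, (D.ad i ^ m) (D.f j) = 0) (a : U) (h : ∀ b, B a b = 0) :
    a = 0 := by
  have : a ∈ (⊥ : Submodule K U) := by
    apply D.ind_p
    intro γ
    rw [Submodule.mem_bot]
    refine rad_wt hB hq hA hs (ht γ) γ rfl _ ?_ ?_
    · rw [p_p, if_pos rfl]
    · intro c
      rw [← hB.p, hB.1, h]
  simpa using this

end QD

end abstract_part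

/-! ### The concrete algebra -/

section concrete_part

set_option linter.unusedSectionVars false

theorem qq_ne : qq ≠ 0 := RatFunc.X_ne_zero

theorem qq_pow_nat (n : ℕ) (h : qq ^ n = 1) : n = 0 := by
  have h1 : algebraMap (Polynomial ℚ) (RatFunc ℚ) (Polynomial.X ^ n) =
      algebraMap (Polynomial ℚ) (RatFunc ℚ) 1 := by
    rw [map_pow, RatFunc.algebraMap_X, map_one]; exact h
  have h2 := RatFunc.algebraMap_injective ℚ h1
  have h3 := congrArg Polynomial.natDegree h2
  simpa using h3

theorem qq_pow (n : ℤ) (h : qq ^ n = 1) : n = 0 := by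
  rcases Int.eq_nat_or_neg n with ⟨k, rfl | rfl⟩
  · rw [zpow_natCast] at h
    simp [qq_pow_nat k h]
  · rw [zpow_neg, inv_eq_one, zpow_natCast] at h
    simp [qq_pow_nat k h]

theorem qq_sub_ne (n : ℤ) (h : n ≠ 0) : qq ^ n - qq ^ (-n) ≠ 0 := by
  intro h1
  rw [sub_eq_zero] at h1
  have : qq ^ (n + n) = 1 := by
    rw [zpow_add₀ qq_ne]
    nth_rewrite 1 [h1]
    rw [← zpow_add₀ qq_ne]
    simp
  have := qq_pow _ this
  omega

theorem qInt_zero (d : ℤ) : qInt d 0 = 0 := by simp [qInt]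

theorem qInt_ne (d : ℤ) (hd : 0 < d) (k : ℕ) : qInt d (k + 1) ≠ 0 := by
  unfold qInt
  apply div_ne_zero
  · apply qq_sub_ne
    positivity
  · exact qq_sub_ne _ hd.ne'

theorem qInt_add (d : ℤ) (a b : ℕ) :
    qInt d (a + b) = qInt d a * qq ^ (d * b) + qInt d b * qq ^ (-(d * a)) := by
  unfold qInt
  rw [div_mul_eq_mul_div, div_mul_eq_mul_div, ← add_div]
  congr 1
  rw [sub_mul, sub_mul]
  simp only [← zpow_add₀ qq_ne]
  rw [show d * ((a + b : ℕ) : ℤ) = d * a + d * b by push_cast; ring,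
    show -(d * (a : ℤ) + d * b) = -(d * b) + -(d * a) by ring,
    show -(d * (a : ℤ)) + d * b = d * b + -(d * a) by ring]
  ring

theorem qFact_succ (d : ℤ) (k : ℕ) : qFact d (k + 1) = qFact d k * qInt d (k + 1) := by
  simp [qFact, Finset.prod_range_succ]

theorem qFact_zero (d : ℤ) : qFact d 0 = 1 := by simp [qFact]

theorem qFact_ne (d : ℤ) (hd : 0 < d) (k : ℕ) : qFact d k ≠ 0 := by
  unfold qFact
  exact Finset.prod_ne_zero_iff.mpr fun m _ => qInt_ne d hd m

/-- The Serre expression in an arbitrary algebra. -/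
def serreE {C : Type} [Ring C] [Algebra KK C] (A : I → I → ℤ) (i j : I) (x y : C) : C :=
  ∑ k ∈ Finset.range (serreN A i j + 1),
    ((-1 : KK) ^ k * (qFact (A i i / 2) k)⁻¹ * (qFact (A i i / 2) (serreN A i j - k))⁻¹) •
      (x ^ k * y * x ^ (serreN A i j - k))

theorem map_fSerre {C : Type} [Ring C] [Algebra KK C] (A : I → I → ℤ) (i j : I)
    (φ : FreeAlgebra KK I →ₐ[KK] C) : φ (fSerre A i j) =
      serreE A i j (φ (FreeAlgebra.ι KK i)) (φ (FreeAlgebra.ι KK j)) := by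
  simp only [fSerre, serreE, map_sum, map_smul, map_mul, map_pow]

theorem serre_fgen (A : I → I → ℤ) (i j : I) (h : i ≠ j) :
    serreE A i j (fgen A i) (fgen A j) = 0 := by
  have h1 := RingQuot.mkAlgHom_rel KK (SerreRel.serre (A := A) i j h)
  rw [map_fSerre, map_zero] at h1
  exact h1

/-- homomorphisms out of `Um A` -/
def umLift {C : Type} [Ring C] [Algebra KK C] (A : I → I → ℤ) (g : I → C)
    (h : ∀ i j, i ≠ j → serreE A i j (g i) (g j) = 0) : Um A →ₐ[KK] C :=
  RingQuot.liftAlgHom KK ⟨FreeAlgebra.lift KK g, by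
    rintro _ _ ⟨i, j, hij⟩
    rw [map_fSerre, map_zero, FreeAlgebra.lift_ι_apply, FreeAlgebra.lift_ι_apply]
    exact h i j hij⟩

theorem umLift_f {C : Type} [Ring C] [Algebra KK C] (A : I → I → ℤ) (g : I → C)
    (h : ∀ i j, i ≠ j → serreE A i j (g i) (g j) = 0) (k : I) :
    umLift A g h (fgen A k) = g k := by
  unfold umLift fgen
  rw [RingQuot.liftAlgHom_mkAlgHom_apply, FreeAlgebra.lift_ι_apply]

theorem serreE_smul {C : Type} [Ring C] [Algebra KK C] (A : I → I → ℤ) (i j : I) (x y : C)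
    (c d : KK) : serreE A i j (c • x) (d • y) = (c ^ serreN A i j * d) • serreE A i j x y := by
  unfold serreE
  rw [Finset.smul_sum]
  refine Finset.sum_congr rfl fun k hk => ?_
  rw [smul_comm]
  congr 1
  have hk' : k ≤ serreN A i j := by
    have := Finset.mem_range.mp hk
    omega
  rw [smul_pow, smul_pow, smul_mul_smul_comm, smul_mul_smul_comm]
  congr 1
  rw [mul_right_comm, ← pow_add, Nat.add_sub_cancel' hk']

theorem serreE_single {C : Type} [Ring C] [Algebra KK C] (A : I → I → ℤ) (i j : I) (x y : C)
    (a b : I →₀ ℕ) : serreE A i j (AddMonoidAlgebra.single a x : AddMonoidAlgebra C (I →₀ ℕ))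
      (AddMonoidAlgebra.single b y) =
        AddMonoidAlgebra.single (serreN A i j • a + b) (serreE A i j x y) := by
  unfold serreE
  rw [← AddMonoidAlgebra.singleAddHom_apply (serreN A i j • a + b), map_sum]
  refine Finset.sum_congr rfl fun k hk => ?_
  have hk' : k ≤ serreN A i j := by
    have := Finset.mem_range.mp hk
    omega
  rw [AddMonoidAlgebra.singleAddHom_apply, AddMonoidAlgebra.single_pow,
    AddMonoidAlgebra.single_pow, AddMonoidAlgebra.single_mul_single,
    AddMonoidAlgebra.single_mul_single, AddMonoidAlgebra.smul_single]
  congr 1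
  rw [add_right_comm, ← add_smul, Nat.add_sub_cancel' hk']

theorem serreE_op {C : Type} [Ring C] [Algebra KK C] (A : I → I → ℤ) (i j : I) (x y : C) :
    serreE A i j (MulOpposite.op x) (MulOpposite.op y) =
        MulOpposite.op ((-1 : KK) ^ serreN A i j • serreE A i j x y) := by
  unfold serreE
  rw [← Finset.sum_range_reflect, Finset.smul_sum, Finset.op_sum]
  refine Finset.sum_congr rfl fun k hk => ?_
  have hk' : k ≤ serreN A i j := by
    have := Finset.mem_range.mp hk
    omega
  obtain ⟨l, hl⟩ := Nat.exists_eq_add_of_le hk'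
  rw [hl, show k + l + 1 - 1 - k = l by omega, show k + l - l = k by omega,
    show k + l - k = l by omega, smul_smul, MulOpposite.op_smul, MulOpposite.op_mul,
    MulOpposite.op_mul, MulOpposite.op_pow, MulOpposite.op_pow, mul_assoc (MulOpposite.op x ^ l)]
  congr 1
  have : ((-1 : KK) ^ k) * (-1) ^ k = 1 := by rw [← mul_pow]; simp
  rw [pow_add]
  linear_combination (-((-1 : KK) ^ l * (qFact (A i i / 2) k)⁻¹ * (qFact (A i i / 2) l)⁻¹)) * this

theorem serreE_zero {C : Type} [Ring C] [Algebra KK C] (A : I → I → ℤ) (i j : I) (x : C) :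
    serreE A i j x 0 = 0 := by
  simp [serreE]

theorem fgen_adjoin (A : I → I → ℤ) : Algebra.adjoin KK (Set.range (fgen A)) = ⊤ := by
  have h : Set.range (fgen A) =
      (RingQuot.mkAlgHom KK (SerreRel A)) '' Set.range (FreeAlgebra.ι KK) := by
    rw [← Set.range_comp]; rfl
  rw [h, ← AlgHom.map_adjoin, FreeAlgebra.adjoin_range_ι, Algebra.map_top,
    AlgHom.range_eq_top]
  exact RingQuot.mkAlgHom_surjective KK (SerreRel A)

/-- the data attached to `Um A` -/
def umQD (A : I → I → ℤ) (hA : IsCartan A)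
    (E : I → Module.End KK (Um A)) (hE : EprimRel A E)
    (Es : I → Module.End KK (Um A)) (hEs : EstarRel A Es) : QD I KK (Um A) where
  A := A
  symm := hA.1
  q := qq
  q0 := qq_ne
  f := fgen A
  gen := fgen_adjoin A
  tau i := umLift A (fun k => qq ^ (-(A i k)) • fgen A k) (fun k j h => by
    rw [serreE_smul, serre_fgen A k j h, smul_zero])
  tau_f i k := umLift_f _ _ _ k
  gr := umLift A (fun k => AddMonoidAlgebra.single (Finsupp.single k 1) (fgen A k))
    (fun k j h => by rw [serreE_single, serre_fgen A k j h, AddMonoidAlgebra.single_zero])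
  gr_f k := umLift_f _ _ _ k
  sg := umLift A (fun k => MulOpposite.op (fgen A k))
    (fun k j h => by rw [serreE_op, serre_fgen A k j h, smul_zero, MulOpposite.op_zero])
  sg_f k := umLift_f _ _ _ k
  ep := umLift A (fun _ => 0) (fun k j h => serreE_zero A k j 0)
  ep_f k := umLift_f _ _ _ k
  E := E
  E_one := hE.1
  E_mul := hE.2
  Es := Es
  Es_one := hEs.1
  Es_mul := hEs.2

/-! ### Powers of the adjoint action -/

/-- coefficient -/
def Tc (d e : ℤ) (a b : ℕ) : KK :=
  (-1) ^ b * qq ^ (-((b : ℤ) * (d * ((a : ℤ) + b - 1) + e))) * (qFact d a)⁻¹ * (qFact d b)⁻¹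

theorem Tc_left (d e : ℤ) (hd : 0 < d) (a b : ℕ) :
    qInt d (a + 1) * qq ^ (d * b) * Tc d e (a + 1) b = Tc d e a b := by
  have h1 := qInt_ne d hd a
  have h2 := qFact_ne d hd a
  have h3 := qFact_ne d hd b
  unfold Tc
  rw [qFact_succ]
  have : qq ^ (-((b : ℤ) * (d * ((a : ℤ) + b - 1) + e))) =
      qq ^ (d * b) * qq ^ (-((b : ℤ) * (d * (((a + 1 : ℕ) : ℤ) + b - 1) + e))) := by
    rw [← zpow_add₀ qq_ne]
    congr 1
    push_cast; ring
  rw [this]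
  field_simp

theorem Tc_right (d e : ℤ) (hd : 0 < d) (a b : ℕ) :
    qInt d (b + 1) * qq ^ (-(d * a)) * Tc d e a (b + 1) =
      -(qq ^ (-(2 * d * ((a : ℤ) + b) + e))) * Tc d e a b := by
  have h1 := qInt_ne d hd b
  have h2 := qFact_ne d hd a
  have h3 := qFact_ne d hd b
  unfold Tc
  rw [qFact_succ]
  have : qq ^ (-(2 * d * ((a : ℤ) + b) + e)) * qq ^ (-((b : ℤ) * (d * ((a : ℤ) + b - 1) + e))) =
      qq ^ (-(d * a)) * qq ^ (-(((b + 1 : ℕ) : ℤ) * (d * ((a : ℤ) + (b + 1 : ℕ) - 1) + e))) := by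
    rw [← zpow_add₀ qq_ne, ← zpow_add₀ qq_ne]
    congr 1
    push_cast; ring
  rw [pow_succ]
  have h4 : ∀ X Y Z W F G : KK, X * Y = Z * W → F * (qInt d (b + 1))⁻¹ = G →
      qInt d (b + 1) * Z * ((-1) ^ b * -1 * W * (qFact d a)⁻¹ * G) =
      -X * ((-1) ^ b * Y * (qFact d a)⁻¹ * F) := by
    rintro X Y Z W F G h rfl
    field_simp
    linear_combination F * h
  exact h4 _ _ _ _ _ _ this (by rw [mul_inv])

/-- divided power of the adjoint action -/
def PP {C : Type} [Ring C] [Algebra KK C] (d e : ℤ) (x y : C) (m : ℕ) : C :=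
  ∑ ab ∈ Finset.HasAntidiagonal.antidiagonal m, Tc d e ab.1 ab.2 • (x ^ ab.1 * y * x ^ ab.2)

theorem PP_succ {C : Type} [Ring C] [Algebra KK C] (d e : ℤ) (hd : 0 < d) (x y : C) (m : ℕ) :
    qInt d (m + 1) • PP d e x y (m + 1) =
      ∑ ab ∈ Finset.HasAntidiagonal.antidiagonal m, Tc d e ab.1 ab.2 • (x ^ (ab.1 + 1) * y * x ^ ab.2) +
      ∑ ab ∈ Finset.HasAntidiagonal.antidiagonal m, (-(qq ^ (-(2 * d * (m : ℤ) + e))) * Tc d e ab.1 ab.2) •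
        (x ^ ab.1 * y * x ^ (ab.2 + 1)) := by
  have h1 : qInt d (m + 1) • PP d e x y (m + 1) =
      ∑ ab ∈ Finset.HasAntidiagonal.antidiagonal (m + 1), (qInt d ab.1 * qq ^ (d * ab.2) * Tc d e ab.1 ab.2) •
        (x ^ ab.1 * y * x ^ ab.2) +
      ∑ ab ∈ Finset.HasAntidiagonal.antidiagonal (m + 1), (qInt d ab.2 * qq ^ (-(d * ab.1)) *
        Tc d e ab.1 ab.2) • (x ^ ab.1 * y * x ^ ab.2) := by
    unfold PP
    rw [Finset.smul_sum, ← Finset.sum_add_distrib]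
    refine Finset.sum_congr rfl fun ab hab => ?_
    rw [← Finset.HasAntidiagonal.mem_antidiagonal.mp hab, qInt_add, smul_smul, ← add_smul, add_mul]
  rw [h1, Finset.Nat.sum_antidiagonal_succ, Finset.Nat.sum_antidiagonal_succ']
  simp only [qInt_zero, zero_mul, zero_smul, zero_add, add_zero]
  congr 1
  · refine Finset.sum_congr rfl fun ab hab => ?_
    rw [Tc_left d e hd]
  · refine Finset.sum_congr rfl fun ab hab => ?_
    rw [Tc_right d e hd, ← Finset.HasAntidiagonal.mem_antidiagonal.mp hab]
    push_cast
    rfl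

theorem PP_zero {C : Type} [Ring C] [Algebra KK C] (d e : ℤ) (x y : C) : PP d e x y 0 = y := by
  simp [PP, Tc, qFact_zero]

theorem ad_PP {C : Type} [Ring C] [Algebra KK C] (D : QD I KK C) (hD : D.q = qq) (d e : ℤ)
    (hd : 0 < d) (i j : I) (hi : D.A i i = 2 * d) (hj : D.A i j = e) (m : ℕ) :
    D.ad i (PP d e (D.f i) (D.f j) m) = qInt d (m + 1) • PP d e (D.f i) (D.f j) (m + 1) := by
  rw [PP_succ d e hd, ← Finset.sum_add_distrib, PP, map_sum]
  refine Finset.sum_congr rfl fun ab hab => ?_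
  have hab' := Finset.HasAntidiagonal.mem_antidiagonal.mp hab
  have ht : D.tau i (D.f i ^ ab.1 * D.f j * D.f i ^ ab.2) =
      qq ^ (-(2 * d * (m : ℤ) + e)) • (D.f i ^ ab.1 * D.f j * D.f i ^ ab.2) := by
    rw [map_mul, map_mul, map_pow, map_pow, D.tau_f, D.tau_f, hD, hi, hj, smul_pow, smul_pow,
      smul_mul_smul_comm, smul_mul_smul_comm]
    congr 1
    rw [← zpow_natCast, ← zpow_natCast, ← zpow_mul, ← zpow_mul, ← zpow_add₀ qq_ne,
      ← zpow_add₀ qq_ne, ← hab']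
    congr 1
    push_cast
    ring
  rw [map_smul, QD.ad_apply, ht, pow_succ', pow_succ]
  simp only [smul_mul_assoc, mul_assoc, neg_mul, neg_smul, sub_eq_add_neg, mul_smul]
  rw [smul_comm, smul_add, smul_neg]

theorem ad_pow_PP {C : Type} [Ring C] [Algebra KK C] (D : QD I KK C) (hD : D.q = qq) (d e : ℤ)
    (hd : 0 < d) (i j : I) (hi : D.A i i = 2 * d) (hj : D.A i j = e) (m : ℕ) :
    (D.ad i ^ m) (D.f j) = qFact d m • PP d e (D.f i) (D.f j) m := by
  induction m with
  | zero => simp [PP_zero, qFact_zero]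
  | succ m ih =>
    rw [pow_succ', Module.End.mul_apply, ih, map_smul, ad_PP D hD d e hd i j hi hj, smul_smul,
      qFact_succ]

theorem PP_serre {C : Type} [Ring C] [Algebra KK C] (A : I → I → ℤ) (i j : I) (d e : ℤ)
    (hd : A i i / 2 = d) (h : d * ((serreN A i j : ℤ) - 1) + e = 0) (x y : C) :
    PP d e x y (serreN A i j) = (-1 : KK) ^ serreN A i j • serreE A i j x y := by
  unfold PP serreE
  rw [Finset.Nat.sum_antidiagonal_eq_sum_range_succ_mk, Finset.smul_sum]
  refine Finset.sum_congr rfl fun k hk => ?_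
  have hk' : k ≤ serreN A i j := by
    have := Finset.mem_range.mp hk
    omega
  obtain ⟨l, hl⟩ := Nat.exists_eq_add_of_le hk'
  rw [hl] at h
  rw [hl, show k + l - k = l by omega, smul_smul, hd]
  congr 1
  unfold Tc
  rw [show d * ((k : ℤ) + (l : ℤ) - 1) + e = 0 by rw [← h]; push_cast; ring]
  have : ((-1 : KK) ^ k) * (-1) ^ k = 1 := by rw [← mul_pow]; simp
  rw [pow_add, mul_zero, neg_zero, zpow_zero]
  linear_combination (-((-1 : KK) ^ l * (qFact d k)⁻¹ * (qFact d l)⁻¹)) * this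

theorem serreN_eq (A : I → I → ℤ) (hA : IsCartan A) (i j : I) (hij : i ≠ j) :
    A i i / 2 * ((serreN A i j : ℤ) - 1) + A i j = 0 := by
  obtain ⟨_, h2, h3, h4, h5⟩ := hA
  obtain ⟨d, hd⟩ := h3 i
  obtain ⟨c, hc⟩ := h5 i j
  have hp := h2 i
  have hn := h4 i j hij
  have hc0 : c ≤ 0 := by
    by_contra h
    push Not at h
    have : 0 < A i i * c := by positivity
    omega
  have hN : (serreN A i j : ℤ) = 1 - c := by
    unfold serreN
    rw [hc, Int.mul_ediv_cancel_left _ hp.ne', Int.toNat_of_nonneg (by omega)]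
  rw [hN]
  have : A i i / 2 = d := by omega
  rw [this]
  rw [hd] at hc
  linarith

end concrete_part

theorem stmt2 (A : I → I → ℤ) (hA : IsCartan A)
    (E : I → Module.End KK (Um A)) (hE : EprimRel A E)
    (Es : I → Module.End KK (Um A)) (hEs : EstarRel A Es) :
    (∃! B : Um A →ₗ[KK] Um A →ₗ[KK] KK, BilProp A E B) ∧
    (∀ B : Um A →ₗ[KK] Um A →ₗ[KK] KK, BilProp A E B →
      (∀ a : Um A, (∀ b : Um A, B a b = 0) → a = 0) ∧
      (∀ (i : I) (a b : Um A), B (Es i a) b = B a (b * fgen A i))) := by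
  let D := umQD A hA E hE Es hEs
  have hs : ∀ i j, j ≠ i → ∃ m, (D.ad i ^ m) (D.f j) = 0 := by
    intro i j hij
    have hd : 0 < A i i / 2 := by
      have h1 := hA.2.1 i
      have h2 := hA.2.2.1 i
      omega
    refine ⟨serreN A i j, ?_⟩
    rw [ad_pow_PP D rfl (A i i / 2) (A i j) hd i j
      (Int.mul_ediv_cancel' (hA.2.2.1 i)).symm rfl,
      PP_serre A i j _ _ rfl (serreN_eq A hA i j hij.symm)]
    have : serreE A i j (D.f i) (D.f j) = 0 := serre_fgen A i j hij.symm
    rw [this, smul_zero, smul_zero]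
  refine ⟨?_, ?_⟩
  · obtain ⟨B, hB⟩ := D.exists_form
    refine ⟨B, hB, ?_⟩
    intro B' hB'
    exact QD.IsForm.unique (D := D) hB' hB
  · intro B hB
    have hB' : D.IsForm B := hB
    refine ⟨?_, ?_⟩
    · intro a ha
      exact QD.nondeg hB' qq_pow hA.2.1 hs a ha
    · exact hB'.Es
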